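/- Let p and q be finite probability vectors and let n ≥ 1 be such that p^{⊗n} majorizes q^{⊗n}. Define r := (1/n) · ⨁_{j=1}^{n} ( p^{⊗(n−j)} ⊗ q^{⊗(j−1)} ). Then r is a finite probability vector and p ⊗ r majorizes q ⊗ r. -/

import Mathlib

open scoped BigOperators NNReal

noncomputable section

/-- A probability vector on a finite index type. -/
def IsProbVec {ι : Type*} [Fintype ι] (p : ι → ℝ) : Prop :=
  (∀ i, 0 ≤ p i) ∧ ∑ i, p i = 1

/-- A (column-)stochastic matrix: nonnegative entries, every column sums to `1`. -/
def IsStochastic {ι κ : Type*} [Fintype ι] [Fintype κ] (T : ι → κ → ℝ) : Prop :=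
  (∀ i j, 0 ≤ T i j) ∧ ∀ j, ∑ i, T i j = 1

/-- Matrix–vector multiplication. -/
def matVec {ι κ : Type*} [Fintype κ] (T : ι → κ → ℝ) (v : κ → ℝ) : ι → ℝ :=
  fun i => ∑ j, T i j * v j

/-- Kronecker product of two vectors. -/
def kron {ι κ : Type*} (p : ι → ℝ) (q : κ → ℝ) : ι × κ → ℝ :=
  fun x => p x.1 * q x.2

/-- `n`-fold Kronecker power of a vector. -/
def kpow {ι : Type*} (p : ι → ℝ) (n : ℕ) : (Fin n → ι) → ℝ :=
  fun f => ∏ j, p (f j)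

/-- Kronecker product reindexed along `Fin (m * n)`. -/
def kronFin {m n : ℕ} (p : Fin m → ℝ) (q : Fin n → ℝ) : Fin (m * n) → ℝ :=
  fun i => kron p q (finProdFinEquiv.symm i)

/-- The sum of the `k` largest entries of a nonnegative vector, expressed as the
largest sum over subsets of cardinality at most `k`. -/
def topSum {ι : Type*} [Fintype ι] (p : ι → ℝ) (k : ℕ) : ℝ :=
  ⨆ s ∈ {s : Finset ι | s.card ≤ k}, ∑ i ∈ s, p i

/-- Majorization for nonnegative vectors (possibly of different lengths):
equal total sums, and for each `k` the sum of the `k` largest entries of `p` is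
at least that of `q`. -/
def Majorizes {ι κ : Type*} [Fintype ι] [Fintype κ] (p : ι → ℝ) (q : κ → ℝ) : Prop :=
  (∑ i, p i = ∑ j, q j) ∧ ∀ k : ℕ, topSum q k ≤ topSum p k

/-- The size of the support, `‖p‖₀`. -/
def supp0 {ι : Type*} [Fintype ι] (p : ι → ℝ) : ℕ :=
  (Finset.univ.filter fun i => p i ≠ 0).card

/-- Entrywise nonnegativity. -/
def NonnegVec {n : ℕ} (p : Fin n → ℝ) : Prop := ∀ i, 0 ≤ p i

/-- The modified majorization preorder `≽₀,₁`: majorization plus equality of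
support sizes. -/
def MajMod {ι κ : Type*} [Fintype ι] [Fintype κ] (p : ι → ℝ) (q : κ → ℝ) : Prop :=
  Majorizes p q ∧ supp0 p = supp0 q

/-- `f_α(p) = ∑_{i ∈ supp p} (p i)^α`. -/
def fA {ι : Type*} [Fintype ι] (α : ℝ) (p : ι → ℝ) : ℝ :=
  ∑ i, if p i = 0 then 0 else p i ^ α

/-- Shannon entropy (the terms with `p i = 0` vanish). -/
def H1ent {ι : Type*} [Fintype ι] (p : ι → ℝ) : ℝ := -∑ i, p i * Real.log (p i)

/-- `H₀'(p) = ∑_{i ∈ supp p} log p_i`. -/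
def H0' {ι : Type*} [Fintype ι] (p : ι → ℝ) : ℝ :=
  ∑ i, if p i = 0 then 0 else Real.log (p i)

/-- Rényi entropy of order `α` (with `α = 1` the Shannon entropy). -/
def Hent {ι : Type*} [Fintype ι] (α : ℝ) (p : ι → ℝ) : ℝ :=
  if α = 1 then -∑ i, p i * Real.log (p i)
  else (1 / (1 - α)) * Real.log (∑ i, if p i = 0 then 0 else p i ^ α)

/-- Min-entropy `H_∞(p) = - log max_i p_i`. -/
def HentInf {ι : Type*} [Fintype ι] (p : ι → ℝ) : ℝ := -Real.log (⨆ i, p i)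

/-- Kullback–Leibler divergence (the terms with `p i = 0` vanish). -/
def KL {n : ℕ} (p q : Fin n → ℝ) : ℝ :=
  ∑ i, p i * Real.log (p i / q i)

/-- Rényi divergence of order `α` for vectors with common support. -/
def Renyi {n : ℕ} (α : ℝ) (p q : Fin n → ℝ) : ℝ :=
  if α = 1 then ∑ i, p i * Real.log (p i / q i)
  else (1 / (α - 1)) * Real.log (∑ i, if p i = 0 then 0 else p i ^ α * q i ^ (1 - α))

/-- Max-divergence `D_∞(p‖q) = max_{i ∈ supp q} log (p_i / q_i)`. -/
def RenyiInf {n : ℕ} (p q : Fin n → ℝ) : ℝ :=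
  ⨆ i ∈ Finset.univ.filter (fun i => q i ≠ 0), Real.log (p i / q i)

/-- Rényi divergence with values in the extended reals `[0, ∞]`. -/
def RenyiE {n : ℕ} (α : ℝ) (p q : Fin n → ℝ) : EReal :=
  if α = 1 then
    (if ∀ i, p i ≠ 0 → q i ≠ 0 then ((∑ i, p i * Real.log (p i / q i) : ℝ) : EReal) else ⊤)
  else if α < 1 then
    (if ∃ i, p i ≠ 0 ∧ q i ≠ 0 then
      (((1 / (α - 1)) *
        Real.log (∑ i, if p i = 0 ∨ q i = 0 then 0 else p i ^ α * q i ^ (1 - α)) : ℝ) : EReal)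
    else (⊤ : EReal))
  else
    (if ∀ i, p i ≠ 0 → q i ≠ 0 then
      (((1 / (α - 1)) *
        Real.log (∑ i, if p i = 0 then 0 else p i ^ α * q i ^ (1 - α)) : ℝ) : EReal)
    else (⊤ : EReal))

/-- The common support of a tuple of vectors. -/
def suppIdx {d n : ℕ} (P : Fin d → Fin n → ℝ) : Finset (Fin n) :=
  Finset.univ.filter fun i => ∃ k, P k i ≠ 0

/-- `f_α(P) = ∑_{i ∈ I} ∏_k (p_i^{(k)})^{α_k}` with `I` the common support. -/
def fMat {d n : ℕ} (α : Fin d → ℝ) (P : Fin d → Fin n → ℝ) : ℝ :=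
  ∑ i ∈ suppIdx P, ∏ k, P k i ^ α k

/-- The matrix `α`-divergence `D_α`. -/
def Dmat {d n : ℕ} (α : Fin d → ℝ) (P : Fin d → Fin n → ℝ) : ℝ :=
  (1 / ((⨆ k, α k) - 1)) * Real.log (∑ i ∈ suppIdx P, ∏ k, P k i ^ α k)

/-- The tropical matrix divergence `D^𝕋_β`. -/
def DmatT {d n : ℕ} (β : Fin d → ℝ) (P : Fin d → Fin n → ℝ) : ℝ :=
  (1 / (⨆ k, β k)) * Real.log (⨆ i ∈ suppIdx P, ∏ k, P k i ^ β k)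

/-- Membership in `A₊`: entries summing to `1`, all nonnegative. -/
def memAplus {d : ℕ} (α : Fin d → ℝ) : Prop := (∑ k, α k = 1) ∧ ∀ k, 0 ≤ α k

/-- Membership in `A₋`: entries summing to `1`, one entry `≥ 1`, the others `≤ 0`. -/
def memAminus {d : ℕ} (α : Fin d → ℝ) : Prop :=
  (∑ k, α k = 1) ∧ ∃ k, 1 ≤ α k ∧ ∀ l, l ≠ k → α l ≤ 0

/-- Membership in `B₋`: entries summing to `0`, one entry `≥ 0`, the others `≤ 0`. -/
def memBminus {d : ℕ} (β : Fin d → ℝ) : Prop :=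
  (∑ k, β k = 0) ∧ ∃ k, 0 ≤ β k ∧ ∀ l, l ≠ k → β l ≤ 0

/-- `α` is none of the standard basis vectors `e₁, …, e_d`. -/
def notBasis {d : ℕ} (α : Fin d → ℝ) : Prop := ∀ k, α ≠ Pi.single k 1

/-- ℓ¹-distance of two vectors, padding with zeros to a common length. -/
def l1PadDist {m n : ℕ} (p : Fin m → ℝ) (q : Fin n → ℝ) : ℝ :=
  ∑ i : Fin (max m n),
    |(if h : (i : ℕ) < m then p ⟨(i : ℕ), h⟩ else 0) -
      (if h : (i : ℕ) < n then q ⟨(i : ℕ), h⟩ else 0)|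

/-- Index type of the direct sum `⨁_{s=0}^{n-1} p^{⊗(n-1-s)} ⊗ q^{⊗s}`. -/
abbrev TrickIdx (m m' n : ℕ) : Type :=
  Σ s : Fin n, (Fin (n - 1 - (s : ℕ)) → Fin m) × (Fin (s : ℕ) → Fin m')

/-- The standard catalyst `(1/n) ⨁_{s=0}^{n-1} p^{⊗(n-1-s)} ⊗ q^{⊗s}`. -/
def trick {m m' : ℕ} (p : Fin m → ℝ) (q : Fin m' → ℝ) (n : ℕ) : TrickIdx m m' n → ℝ :=
  fun x => (1 / (n : ℝ)) * (kpow p (n - 1 - (x.1 : ℕ)) x.2.1 * kpow q (x.1 : ℕ) x.2.2)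

/-- A valid tuple: nonnegative entries and common support across the tuple. -/
def TupOK {d n : ℕ} (P : Fin d → Fin n → ℝ) : Prop :=
  (∀ k i, 0 ≤ P k i) ∧ ∀ k l i, P k i ≠ 0 ↔ P l i ≠ 0

/-- Matrix majorization of tuples: a single stochastic matrix carrying each column
of `P` to the corresponding column of `Q`. -/
def TupMaj {d m n : ℕ} (P : Fin d → Fin m → ℝ) (Q : Fin d → Fin n → ℝ) : Prop :=
  ∃ T : Fin n → Fin m → ℝ, IsStochastic T ∧ ∀ k, matVec T (P k) = Q k

/-!
Up to reindexing, vectors form a commutative semiring under `⊕` and `⊗`, and majorization is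
compatible with `⊕`. In this semiring let `r = ⨁_{s < n} p^{n-1-s} q^s`, the catalyst up to the
factor `1 / n`. Then `p ⊗ r = pⁿ ⊕ M` and `q ⊗ r = M ⊕ qⁿ` with the same middle part
`M = ⨁_{0 < s < n} p^{n-s} q^s`, so replacing `pⁿ` by `qⁿ` is all that is needed. Summand by
summand, the `(s + 1)`-st summand of `p ⊗ r` is matched with the `s`-th summand of `q ⊗ r`,
cyclically.
-/

/-- The direct sum `⨁ₛ uₛ` of a family of vectors; its entries are indexed by pairs of an `s` and
an index of `uₛ`. -/
def directSum {S : Type*} {A : S → Type*} (u : ∀ s, A s → ℝ) : (Σ s, A s) → ℝ :=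
  fun x => u x.1 x.2

/-- The Kronecker analogue `⨁_{s < n} p^{⊗(n-1-s)} ⊗ q^{⊗s}` of the geometric sum
`∑_{s < n} x^{n-1-s} y^s`. It is `n` times the catalyst `trick`, for vectors over arbitrary index
types. -/
def kronGeomSum {ι κ : Type*} (p : ι → ℝ) (q : κ → ℝ) (n : ℕ) :
    (Σ s : Fin n, (Fin (n - 1 - (s : ℕ)) → ι) × (Fin (s : ℕ) → κ)) → ℝ :=
  directSum fun s : Fin n => kron (kpow p (n - 1 - s)) (kpow q s)

/-- Equality of vectors up to a relabelling of their indices. Modulo this relation `kron` and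
`directSum` satisfy the laws of a commutative semiring, which fail on the nose because the index
types differ. -/
def EqUpToReindex {ι κ : Type*} (p : ι → ℝ) (q : κ → ℝ) : Prop :=
  ∃ e : ι ≃ κ, ∀ i, p i = q (e i)

namespace EqUpToReindex

variable {ι κ μ ν : Type*}

theorem refl (p : ι → ℝ) : EqUpToReindex p p :=
  ⟨Equiv.refl ι, fun _ => rfl⟩

theorem symm {p : ι → ℝ} {q : κ → ℝ} : EqUpToReindex p q → EqUpToReindex q p :=
  fun ⟨e, he⟩ => ⟨e.symm, fun j => by rw [he, e.apply_symm_apply]⟩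

theorem trans {p : ι → ℝ} {q : κ → ℝ} {r : μ → ℝ} :
    EqUpToReindex p q → EqUpToReindex q r → EqUpToReindex p r :=
  fun ⟨e, he⟩ ⟨f, hf⟩ => ⟨e.trans f, fun i => (he i).trans (hf (e i))⟩

theorem kron_congr {p : ι → ℝ} {q : κ → ℝ} {r : μ → ℝ} {t : ν → ℝ} :
    EqUpToReindex p q → EqUpToReindex r t → EqUpToReindex (kron p r) (kron q t) :=
  fun ⟨e, he⟩ ⟨f, hf⟩ => ⟨e.prodCongr f, fun x => congrArg₂ (· * ·) (he x.1) (hf x.2)⟩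

theorem kron_comm (p : ι → ℝ) (q : κ → ℝ) : EqUpToReindex (kron p q) (kron q p) :=
  ⟨Equiv.prodComm ι κ, fun _ => mul_comm _ _⟩

theorem kron_assoc (p : ι → ℝ) (q : κ → ℝ) (r : μ → ℝ) :
    EqUpToReindex (kron (kron p q) r) (kron p (kron q r)) :=
  ⟨Equiv.prodAssoc ι κ μ, fun _ => mul_assoc _ _ _⟩

theorem kron_left_comm (p : ι → ℝ) (q : κ → ℝ) (r : μ → ℝ) :
    EqUpToReindex (kron p (kron q r)) (kron q (kron p r)) :=
  (kron_assoc p q r).symm.trans <|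
    ((kron_comm p q).kron_congr (refl r)).trans (kron_assoc q p r)

theorem kron_directSum {S : Type*} {A : S → Type*} (p : ι → ℝ) (u : ∀ s, A s → ℝ) :
    EqUpToReindex (kron p (directSum u)) (directSum fun s => kron p (u s)) :=
  ⟨{ toFun := fun x => ⟨x.2.1, x.1, x.2.2⟩
     invFun := fun x => (x.2.1, ⟨x.1, x.2.2⟩) }, fun _ => rfl⟩

theorem directSum_comp_equiv {S T : Type*} {A : S → Type*} (u : ∀ s, A s → ℝ) (e : T ≃ S) :
    EqUpToReindex (directSum fun t => u (e t)) (directSum u) :=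
  ⟨Equiv.sigmaCongrLeft e, fun _ => rfl⟩

theorem kpow_zero_kron (p : ι → ℝ) (r : κ → ℝ) : EqUpToReindex (kron (kpow p 0) r) r :=
  ⟨Equiv.uniqueProd κ (Fin 0 → ι), fun x => by simp [kron, kpow]⟩

theorem kron_kpow_zero (r : κ → ℝ) (p : ι → ℝ) : EqUpToReindex (kron r (kpow p 0)) r :=
  (kron_comm r (kpow p 0)).trans (kpow_zero_kron p r)

theorem kron_kpow (p : ι → ℝ) (n : ℕ) : EqUpToReindex (kron p (kpow p n)) (kpow p (n + 1)) :=
  ⟨Fin.consEquiv fun _ => ι, fun x => by simp [kron, kpow, Fin.consEquiv, Fin.prod_univ_succ]⟩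

theorem kron_kpow_kron (p : ι → ℝ) (n : ℕ) (r : κ → ℝ) :
    EqUpToReindex (kron p (kron (kpow p n) r)) (kron (kpow p (n + 1)) r) :=
  (kron_assoc p (kpow p n) r).symm.trans ((kron_kpow p n).kron_congr (refl r))

theorem kron_kron_kpow (p : ι → ℝ) (r : κ → ℝ) (n : ℕ) :
    EqUpToReindex (kron p (kron r (kpow p n))) (kron r (kpow p (n + 1))) :=
  (kron_left_comm p r (kpow p n)).trans ((refl r).kron_congr (kron_kpow p n))

theorem kron_kpow_exchange (p : ι → ℝ) (q : κ → ℝ) (a b : ℕ) :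
    EqUpToReindex (kron p (kron (kpow p a) (kpow q (b + 1))))
      (kron q (kron (kpow p (a + 1)) (kpow q b))) :=
  (kron_kpow_kron p a (kpow q (b + 1))).trans (kron_kron_kpow q (kpow p (a + 1)) b).symm

end EqUpToReindex

theorem kron_smul {ι κ : Type*} (c : ℝ) (p : ι → ℝ) (r : κ → ℝ) :
    kron p (c • r) = c • kron p r :=
  funext fun _ => mul_left_comm _ _ _

section TopSum

variable {ι κ : Type*} [Fintype ι] [Fintype κ]

theorem sum_le_topSum (p : ι → ℝ) {k : ℕ} {s : Finset ι} (hs : s.card ≤ k) :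
    ∑ i ∈ s, p i ≤ topSum p k :=
  (ciSup_pos (f := fun _ => ∑ i ∈ s, p i) hs).ge.trans
    (le_ciSup (f := fun s : Finset ι => ⨆ _ : s.card ≤ k, ∑ i ∈ s, p i)
      (Set.finite_range _).bddAbove s)

theorem exists_sum_eq_topSum (p : ι → ℝ) (k : ℕ) :
    ∃ s : Finset ι, s.card ≤ k ∧ ∑ i ∈ s, p i = topSum p k := by
  obtain ⟨s, hs⟩ := exists_eq_ciSup_of_finite
    (f := fun s : Finset ι => ⨆ _ : s.card ≤ k, ∑ i ∈ s, p i)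
  by_cases hcard : s.card ≤ k
  · exact ⟨s, hcard, (ciSup_pos hcard).symm.trans hs⟩
  · -- A set that is too large contributes the real supremum over `∅`, which is `0`.
    have : IsEmpty (s.card ≤ k) := ⟨hcard⟩
    exact ⟨∅, by simp, (Real.iSup_of_isEmpty _).symm.trans hs⟩

theorem topSum_le_topSum_iff_exists_sum_le {p : ι → ℝ} {q : κ → ℝ} :
    (∀ k, topSum q k ≤ topSum p k) ↔
      ∀ s : Finset κ, ∃ t : Finset ι, t.card ≤ s.card ∧ ∑ j ∈ s, q j ≤ ∑ i ∈ t, p i := by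
  constructor
  · intro h s
    obtain ⟨t, ht, hsum⟩ := exists_sum_eq_topSum p s.card
    exact ⟨t, ht, ((sum_le_topSum q le_rfl).trans (h s.card)).trans_eq hsum.symm⟩
  · intro h k
    obtain ⟨s, hs, hsum⟩ := exists_sum_eq_topSum q k
    obtain ⟨t, ht, hle⟩ := h s
    exact hsum.symm.le.trans (hle.trans (sum_le_topSum p (ht.trans hs)))

theorem majorizes_iff {p : ι → ℝ} {q : κ → ℝ} :
    Majorizes p q ↔ ∑ i, p i = ∑ j, q j ∧
      ∀ s : Finset κ, ∃ t : Finset ι, t.card ≤ s.card ∧ ∑ j ∈ s, q j ≤ ∑ i ∈ t, p i :=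
  and_congr_right fun _ => topSum_le_topSum_iff_exists_sum_le

theorem EqUpToReindex.majorizes {p : ι → ℝ} {q : κ → ℝ} (h : EqUpToReindex p q) :
    Majorizes p q := by
  obtain ⟨e, he⟩ := h.symm
  refine majorizes_iff.2 ⟨?_, fun s => ⟨s.map e.toEmbedding, (s.card_map _).le, ?_⟩⟩
  · simp only [he, e.sum_comp]
  · simp only [he, Finset.sum_map, Equiv.coe_toEmbedding, le_refl]

end TopSum

namespace Majorizes

variable {ι κ μ : Type*} [Fintype ι] [Fintype κ] [Fintype μ]

theorem trans {p : ι → ℝ} {q : κ → ℝ} {r : μ → ℝ} (hpq : Majorizes p q) (hqr : Majorizes q r) :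
    Majorizes p r :=
  ⟨hpq.1.trans hqr.1, fun k => (hqr.2 k).trans (hpq.2 k)⟩

theorem smul {p : ι → ℝ} {q : κ → ℝ} {c : ℝ} (hc : 0 ≤ c) (h : Majorizes p q) :
    Majorizes (c • p) (c • q) := by
  rw [majorizes_iff] at h ⊢
  simp only [Pi.smul_apply, ← Finset.smul_sum]
  refine ⟨congrArg (c • ·) h.1, fun s => ?_⟩
  obtain ⟨t, ht, hle⟩ := h.2 s
  exact ⟨t, ht, smul_le_smul_of_nonneg_left hle hc⟩

protected theorem directSum {S : Type*} [Fintype S] {A B : S → Type*} [∀ s, Fintype (A s)]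
    [∀ s, Fintype (B s)] {u : ∀ s, A s → ℝ} {v : ∀ s, B s → ℝ}
    (h : ∀ s, Majorizes (u s) (v s)) : Majorizes (directSum u) (directSum v) := by
  classical
  simp only [majorizes_iff] at h
  refine majorizes_iff.2 ⟨?_, fun s => ?_⟩
  · simp only [Fintype.sum_sigma]
    exact Finset.sum_congr rfl fun i _ => (h i).1
  · let fiber (i : S) : Finset (B i) := s.preimage (Sigma.mk i) sigma_mk_injective.injOn
    have hs : s = Finset.univ.sigma fiber :=
      (s.sigma_preimage_mk_of_subset (Finset.subset_univ _)).symm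
    choose t ht hle using fun i => (h i).2 (fiber i)
    refine ⟨Finset.univ.sigma t, ?_, ?_⟩
    · rw [hs, Finset.card_sigma, Finset.card_sigma]
      exact Finset.sum_le_sum fun i _ => ht i
    · rw [hs, Finset.sum_sigma, Finset.sum_sigma]
      exact Finset.sum_le_sum fun i _ => hle i

theorem kron_directSum {S T : Type*} [Fintype S] [Fintype T] {A : S → Type*} {B : T → Type*}
    [∀ s, Fintype (A s)] [∀ t, Fintype (B t)] {p : ι → ℝ} {q : κ → ℝ} {u : ∀ s, A s → ℝ}
    {v : ∀ t, B t → ℝ} (e : T ≃ S) (h : ∀ t, Majorizes (kron p (u (e t))) (kron q (v t))) :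
    Majorizes (kron p (directSum u)) (kron q (directSum v)) :=
  have hp : EqUpToReindex (kron p (directSum u)) (directSum fun t => kron p (u (e t))) :=
    (EqUpToReindex.kron_directSum p u).trans
      (EqUpToReindex.directSum_comp_equiv (fun s => kron p (u s)) e).symm
  (hp.majorizes.trans (.directSum h)).trans (EqUpToReindex.kron_directSum q v).symm.majorizes

end Majorizes

theorem trick_eq_smul_kronGeomSum {m m' : ℕ} (p : Fin m → ℝ) (q : Fin m' → ℝ) (n : ℕ) :
    trick p q n = (1 / (n : ℝ)) • kronGeomSum p q n :=
  rfl

namespace IsProbVec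

protected theorem kron {ι κ : Type*} [Fintype ι] [Fintype κ] {p : ι → ℝ} {q : κ → ℝ}
    (hp : IsProbVec p) (hq : IsProbVec q) : IsProbVec (kron p q) :=
  ⟨fun x => mul_nonneg (hp.1 x.1) (hq.1 x.2), by
    simp only [kron, Fintype.sum_prod_type, ← Finset.sum_mul_sum, hp.2, hq.2, mul_one]⟩

protected theorem kpow {ι : Type*} [Fintype ι] {p : ι → ℝ} (hp : IsProbVec p) (n : ℕ) :
    IsProbVec (kpow p n) :=
  ⟨fun f => Finset.prod_nonneg fun j _ => hp.1 (f j), by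
    simp only [kpow, ← Fintype.sum_pow, hp.2, one_pow]⟩

theorem uniform_directSum {S : Type*} [Fintype S] [Nonempty S] {A : S → Type*}
    [∀ s, Fintype (A s)] {u : ∀ s, A s → ℝ} (hu : ∀ s, IsProbVec (u s)) :
    IsProbVec ((1 / (Fintype.card S : ℝ)) • directSum u) := by
  refine ⟨fun x => mul_nonneg (by positivity) ((hu x.1).1 x.2), ?_⟩
  simp only [Pi.smul_apply, ← Finset.smul_sum, Fintype.sum_sigma, directSum, (hu _).2]
  simp

protected theorem trick {m m' : ℕ} {p : Fin m → ℝ} {q : Fin m' → ℝ}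
    (hp : IsProbVec p) (hq : IsProbVec q) {n : ℕ} (hn : 1 ≤ n) : IsProbVec (trick p q n) := by
  have : Nonempty (Fin n) := ⟨⟨0, hn⟩⟩
  simpa only [trick_eq_smul_kronGeomSum, kronGeomSum, Fintype.card_fin] using
    uniform_directSum fun s : Fin n => (hp.kpow (n - 1 - s)).kron (hq.kpow s)

end IsProbVec

section Catalyst

variable {ι κ : Type*} [Fintype ι] [Fintype κ]

theorem Majorizes.kron_kron_kpow_zero {p : ι → ℝ} {q : κ → ℝ} {n : ℕ}
    (h : Majorizes (kpow p (n + 1)) (kpow q (n + 1))) :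
    Majorizes (kron p (kron (kpow p n) (kpow q 0))) (kron q (kron (kpow p 0) (kpow q n))) :=
  have hp : EqUpToReindex (kron p (kron (kpow p n) (kpow q 0))) (kpow p (n + 1)) :=
    (EqUpToReindex.kron_kpow_kron p n (kpow q 0)).trans (.kron_kpow_zero _ q)
  have hq : EqUpToReindex (kron q (kron (kpow p 0) (kpow q n))) (kpow q (n + 1)) :=
    (EqUpToReindex.kron_kron_kpow q (kpow p 0) n).trans (.kpow_zero_kron p _)
  (hp.majorizes.trans h).trans hq.symm.majorizes

theorem asymptotic_implies_catalytic_general (p : ι → ℝ) (q : κ → ℝ) (n : ℕ)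
    (hmaj : Majorizes (kpow p n) (kpow q n)) :
    Majorizes (kron p (kronGeomSum p q n)) (kron q (kronGeomSum p q n)) := by
  refine .kron_directSum (finRotate n) fun s => ?_
  obtain _ | n := n
  · exact s.elim0
  cases s using Fin.lastCases with
  | last =>
    have hlast : n + 1 - 1 - (Fin.last n : ℕ) = 0 := Nat.sub_self n
    rw [finRotate_last, hlast]
    exact hmaj.kron_kron_kpow_zero
  | cast s =>
    have hs : n + 1 - 1 - (s.castSucc : ℕ) = n + 1 - 1 - (s.succ : ℕ) + 1 := by
      simp only [Fin.val_castSucc, Fin.val_succ]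
      omega
    rw [finRotate_apply, Fin.coeSucc_eq_succ, hs]
    exact (EqUpToReindex.kron_kpow_exchange p q _ s).majorizes

end Catalyst

/-- **From asymptotic to catalytic majorization.**  If `p^{⊗n}` majorizes
`q^{⊗n}`, then `r = (1/n) ⨁_{j=1}^{n} p^{⊗(n-j)} ⊗ q^{⊗(j-1)}` is a
probability vector and `p ⊗ r` majorizes `q ⊗ r`. -/
theorem asymptotic_implies_catalytic
    {m m' : ℕ} (p : Fin m → ℝ) (q : Fin m' → ℝ)
    (hp : IsProbVec p) (hq : IsProbVec q)
    (n : ℕ) (hn : 1 ≤ n)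
    (hmaj : Majorizes (kpow p n) (kpow q n)) :
    IsProbVec (trick p q n) ∧
      Majorizes (kron p (trick p q n)) (kron q (trick p q n)) := by
  refine ⟨hp.trick hq hn, ?_⟩
  simpa only [trick_eq_smul_kronGeomSum, kron_smul] using
    (asymptotic_implies_catalytic_general p q n hmaj).smul (by positivity)
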